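/- Let (V, f) be a finite-dimensional nondegenerate symmetric bilinear space over a field K with char K ≠ 2, and let φ ∈ SO(V) with αφα⁻¹ = φ⁻¹ for some α ∈ SO(V). Then φ = στ for some involutions σ, τ ∈ SO(V). -/

import Mathlib

open Polynomial Module

namespace Biref

variable {K V : Type*} [Field K] [AddCommGroup V] [Module K V]

/-- The orthogonal group of a bilinear form: all linear automorphisms preserving `f`. -/
def orthGroup (f : LinearMap.BilinForm K V) : Subgroup (V ≃ₗ[K] V) where
  carrier := {φ | ∀ x y : V, f (φ x) (φ y) = f x y}
  one_mem' := fun _ _ => rfl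
  mul_mem' := by
    intro a b ha hb x y
    simpa using (ha (b x) (b y)).trans (hb x y)
  inv_mem' := by
    intro a ha x y
    show f (a.symm x) (a.symm y) = f x y
    conv_rhs => rw [← a.apply_symm_apply x, ← a.apply_symm_apply y]
    exact (ha _ _).symm

/-- The special orthogonal group: isometries of determinant 1. -/
def specialOrthGroup (f : LinearMap.BilinForm K V) : Subgroup (V ≃ₗ[K] V) where
  carrier := {φ | (∀ x y : V, f (φ x) (φ y) = f x y) ∧
      LinearMap.det (φ : V →ₗ[K] V) = 1}
  one_mem' := ⟨fun _ _ => rfl, by simp⟩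
  mul_mem' := by
    rintro a b ⟨ha, ha'⟩ ⟨hb, hb'⟩
    refine ⟨fun x y => by simpa using (ha (b x) (b y)).trans (hb x y), ?_⟩
    rw [LinearEquiv.coe_toLinearMap_mul, map_mul, ha', hb', one_mul]
  inv_mem' := by
    rintro a ⟨ha, ha'⟩
    refine ⟨fun x y => ?_, ?_⟩
    · show f (a.symm x) (a.symm y) = f x y
      conv_rhs => rw [← a.apply_symm_apply x, ← a.apply_symm_apply y]
      exact (ha _ _).symm
    · have h1 : LinearMap.det ((a⁻¹ * a : V ≃ₗ[K] V) : V →ₗ[K] V) = 1 := by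
        rw [inv_mul_cancel, LinearEquiv.coe_toLinearMap_one, LinearMap.det_id]
      rw [LinearEquiv.coe_toLinearMap_mul, map_mul, ha', mul_one] at h1
      exact h1

/-- The commutator subgroup `Ω(V)` of the orthogonal group. -/
def omegaGroup (f : LinearMap.BilinForm K V) : Subgroup (V ≃ₗ[K] V) :=
  ⁅orthGroup f, orthGroup f⁆

/-- `g` is a product of two involutions lying in the subgroup `H`. -/
def IsBireflectionalIn {G : Type*} [Group G] (H : Subgroup G) (g : G) : Prop :=
  ∃ σ τ : G, σ ∈ H ∧ τ ∈ H ∧ σ ^ 2 = 1 ∧ τ ^ 2 = 1 ∧ g = σ * τ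

/-- `g` is bireflectional in the group `G`. -/
def IsBireflectional {G : Type*} [Group G] (g : G) : Prop :=
  ∃ σ τ : G, σ ^ 2 = 1 ∧ τ ^ 2 = 1 ∧ g = σ * τ

/-- `g` is reversed by some element of `H`. -/
def IsReversibleIn {G : Type*} [Group G] (H : Subgroup G) (g : G) : Prop :=
  ∃ α : G, α ∈ H ∧ α * g * α⁻¹ = g⁻¹

/-- A subspace is invariant under an endomorphism. -/
def Invt (ψ : V →ₗ[K] V) (U : Submodule K V) : Prop :=
  ∀ x ∈ U, ψ x ∈ U

/-- The discriminant of a (finite-dimensional, nondegenerate) bilinear space is the class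
of `d` in `K*/(K*)²`: some Gram determinant equals `d` times a nonzero square. -/
def HasDisc (f : LinearMap.BilinForm K V) (d : K) : Prop :=
  ∃ (b : Basis (Fin (Module.finrank K V)) K V) (c : Kˣ),
    (Matrix.of fun i j => f (b i) (b j)).det = d * (c : K) ^ 2

/-- A nondegenerate symmetric bilinear space is hyperbolic iff its Witt index is half its
dimension, i.e. there is a totally isotropic subspace of half the dimension. -/
def IsHyperbolicSpace (f : LinearMap.BilinForm K V) : Prop :=
  ∃ W : Submodule K V, (∀ x ∈ W, ∀ y ∈ W, f x y = 0) ∧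
    2 * Module.finrank K W = Module.finrank K V

/-- The multiplicity of `p ^ d` as an elementary divisor of `φ`. -/
noncomputable def edMult (φ : Module.End K V) (p : K[X]) (d : ℕ) : ℕ :=
  (2 * Module.finrank K (LinearMap.ker (Polynomial.aeval φ p ^ d))
    - Module.finrank K (LinearMap.ker (Polynomial.aeval φ p ^ (d + 1)))
    - Module.finrank K (LinearMap.ker (Polynomial.aeval φ p ^ (d - 1)))) / p.natDegree

/-- `n_j(φ)`: the number of elementary divisors `(x ± 1) ^ d` of `φ` with `d ≡ j mod 8`,
counted with multiplicity. -/
noncomputable def nPM [FiniteDimensional K V] (φ : Module.End K V) (j : ℕ) : ℕ :=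
  ∑ d ∈ Finset.range (Module.finrank K V + 1),
    if d % 8 = j % 8 then edMult φ (X - 1) d + edMult φ (X + 1) d else 0

/-- The Fitting one space `Bahn^∞(ψ) = ⋂ⱼ im (ψ - 1)^j`. -/
noncomputable def bahnInf (ψ : Module.End K V) : Submodule K V :=
  ⨅ j : ℕ, LinearMap.range ((ψ - 1) ^ j)

/-- The `K[x]`-submodule generated by `v` (`x` acting as `ψ`). -/
def cycSub (ψ : Module.End K V) (v : V) : Submodule K V :=
  Submodule.span K (Set.range fun n : ℕ => (ψ ^ n) v)

/-- `V` is a cyclic `K[x]`-module, `x` acting as `ψ`. -/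
def IsCyclicEnd (ψ : Module.End K V) : Prop :=
  ∃ v : V, cycSub ψ v = ⊤

/-- `V` is a direct sum of two cyclic `K[x]`-submodules, `x` acting as `ψ`. -/
def IsBicyclicEnd (ψ : Module.End K V) : Prop :=
  ∃ v w : V, cycSub ψ v ⊓ cycSub ψ w = ⊥ ∧ cycSub ψ v ⊔ cycSub ψ w = ⊤

/-- `V` is an indecomposable `K[x]`-module, `x` acting as `ψ`. -/
def ModIndec (ψ : Module.End K V) : Prop :=
  (⊥ : Submodule K V) ≠ ⊤ ∧
    ¬∃ A B : Submodule K V, Invt ψ A ∧ Invt ψ B ∧ A ≠ ⊥ ∧ B ≠ ⊥ ∧ A ⊓ B = ⊥ ∧ A ⊔ B = ⊤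

/-- `ψ` is orthogonally indecomposable w.r.t. `f`: `V ≠ 0` and the only nondegenerate
invariant subspaces are `0` and `V`. -/
def OrthIndec (f : LinearMap.BilinForm K V) (ψ : Module.End K V) : Prop :=
  (⊥ : Submodule K V) ≠ ⊤ ∧
    ∀ U : Submodule K V, Invt ψ U → (f.restrict U).Nondegenerate → U = ⊥ ∨ U = ⊤

/-- The Witt index: the dimension of a maximal totally isotropic subspace. -/
noncomputable def wittIndex (f : LinearMap.BilinForm K V) : ℕ :=
  sSup {n | ∃ W : Submodule K V, (∀ x ∈ W, ∀ y ∈ W, f x y = 0) ∧ Module.finrank K W = n}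

/-!
A skew-adjoint map `Y` is conjugated to `-Y` by an involutive isometry: one repeatedly splits off a
nondegenerate `Y`-invariant subspace generated by one vector `v`, where `p(Y) v ↦ p(-Y) v` works,
or, if `Y` is nilpotent of even index, by two vectors `v, w`, where
`p(Y) v + q(Y) w ↦ p(-Y) v - q(-Y) w` works. The Cayley transform carries this over to isometries
without eigenvalue `-1`. Since the generalized `-1`-eigenspace of an isometry is an orthogonal
summand, on which `-φ` does not have eigenvalue `-1`, every isometry `φ` is conjugated to `φ⁻¹` by
some involutive isometry `σ` (Wonenburger).

Suppose `det σ = -1`, and let `α ∈ SO(V)` conjugate `φ` to `φ⁻¹`. Then `β = ασ` commutes with `φ`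
and has determinant `-1`, so its generalized `-1`-eigenspace is a `φ`-invariant orthogonal summand
`U` of odd dimension. Gluing reversals of `φ` on `U` and on its orthogonal complement, with a change
of sign on `U` if necessary, gives one of determinant `1`.
-/

section AdjointPairs

variable {f : LinearMap.BilinForm K V} {P Q : End K V}

lemma isAdjointPair_aeval (hPQ : f.IsAdjointPair f P Q) (p : K[X]) :
    f.IsAdjointPair f (aeval P p) (aeval Q p) := by
  induction p using Polynomial.induction_on with
  | C a => exact fun x y => by simp [algebraMap_end_apply]
  | add p q hp hq => rw [map_add, map_add]; exact hp.add hq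
  | monomial n a h =>
    rw [pow_succ, ← mul_assoc, map_mul (aeval P), mul_comm _ X, map_mul (aeval Q), aeval_X, aeval_X]
    exact h.mul hPQ

lemma isAdjointPair_pow (hPQ : f.IsAdjointPair f P Q) (n : ℕ) :
    f.IsAdjointPair f ⇑(P ^ n) ⇑(Q ^ n) := by
  simpa only [map_pow, aeval_X] using isAdjointPair_aeval hPQ (X ^ n)

lemma isAdjointPair_symm (hf : f.IsSymm) (hPQ : f.IsAdjointPair f P Q) :
    f.IsAdjointPair f Q P := fun x y =>
  (hf.eq (Q x) y).trans ((hPQ y x).symm.trans (hf.eq (P y) x))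

lemma orthogonal_invariant (hPQ : f.IsAdjointPair f P Q) {U : Submodule K V}
    (hU : ∀ x ∈ U, P x ∈ U) : ∀ x ∈ f.orthogonal U, Q x ∈ f.orthogonal U :=
  fun x hx u hu => (hPQ u x).symm.trans (hx (P u) (hU u hu))

lemma apply_apply_of_isAdjointPair (hPQ : f.IsAdjointPair f P Q) (hQP : Q * P = 1) (x y : V) :
    f (P x) (P y) = f x y :=
  (hPQ x (P y)).trans (congrArg (f x) (LinearMap.congr_fun hQP y))

lemma isSymm_restrict (hf : f.IsSymm) (U : Submodule K V) : (f.restrict U).IsSymm :=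
  ⟨fun x y => hf.eq x y⟩

lemma restrict_mul_restrict_eq_one (hQP : Q * P = 1) {U : Submodule K V}
    (hPU : ∀ x ∈ U, P x ∈ U) (hQU : ∀ x ∈ U, Q x ∈ U) :
    Q.restrict hQU * P.restrict hPU = 1 :=
  LinearMap.ext fun x => Subtype.ext (LinearMap.congr_fun hQP x)

lemma nondegenerate_restrict_orthogonal [FiniteDimensional K V] (hf : f.IsSymm)
    (hnd : f.Nondegenerate) {U : Submodule K V} (hU : (f.restrict U).Nondegenerate) :
    (f.restrict (f.orthogonal U)).Nondegenerate := by
  rw [LinearMap.BilinForm.restrict_nondegenerate_iff_isCompl_orthogonal hf.isRefl,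
    LinearMap.BilinForm.orthogonal_orthogonal hnd hf.isRefl]
  exact (LinearMap.BilinForm.isCompl_orthogonal_of_restrict_nondegenerate hf.isRefl hU).symm

lemma exists_apply_self_ne_zero (hK : (2 : K) ≠ 0) (hf : f.IsSymm) (hnd : f.Nondegenerate)
    (hP : f.IsAdjointPair f P P) (hP0 : P ≠ 0) : ∃ v, f (P v) v ≠ 0 := by
  by_contra! h
  refine hP0 (LinearMap.ext fun x => hnd.1 _ fun y => ?_)
  have hxy := h (x + y)
  simp only [map_add, LinearMap.add_apply, h, hP y x, hf.eq y] at hxy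
  refine (mul_eq_zero.1 (?_ : 2 * f (P x) y = 0)).resolve_left hK
  linear_combination hxy

lemma apply_self_eq_zero (hK : (2 : K) ≠ 0) (hf : f.IsSymm) (hP : f.IsAdjointPair f P ⇑(-P))
    (x : V) : f (P x) x = 0 := by
  have h := hP x x
  rw [LinearMap.neg_apply, map_neg, hf.eq x, eq_neg_iff_add_eq_zero, ← two_mul] at h
  exact (mul_eq_zero.1 h).resolve_left hK

lemma det_eq_of_isAdjointPair [FiniteDimensional K V] (hnd : f.Nondegenerate)
    (hPQ : f.IsAdjointPair f P Q) : LinearMap.det P = LinearMap.det Q := by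
  rw [← LinearMap.det_dualMap Q, ← LinearMap.det_conj P (f.toDual hnd)]
  congr 1
  refine LinearMap.ext fun g => LinearMap.ext fun y => ?_
  obtain ⟨x, rfl⟩ := (f.toDual hnd).surjective g
  simpa [LinearMap.BilinForm.toDual_def] using hPQ x y

end AdjointPairs

lemma det_eq_det_restrict_mul_det_restrict [FiniteDimensional K V] {U W : Submodule K V}
    (hUW : IsCompl U W) {φ : End K V} (hU : ∀ x ∈ U, φ x ∈ U) (hW : ∀ x ∈ W, φ x ∈ W) :
    LinearMap.det φ = LinearMap.det (φ.restrict hU) * LinearMap.det (φ.restrict hW) := by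
  rw [← LinearMap.det_prodMap, ← LinearMap.det_conj _ (Submodule.prodEquivOfIsCompl U W hUW)]
  congr 1
  refine LinearMap.ext fun x => ?_
  obtain ⟨x, rfl⟩ := (Submodule.prodEquivOfIsCompl U W hUW).surjective x
  simp

/-- `σ` is an involutive isometry of `f` conjugating `P` to `Q`. This is applied to a map `P` and
its adjoint `Q`: the inverse if `P` is an isometry, and `-P` if `P` is skew-adjoint. -/
structure IsReversal (f : LinearMap.BilinForm K V) (P Q σ : End K V) : Prop where
  involutive : Function.Involutive σ
  isOrthogonal : f.IsOrthogonal σ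
  semiconj : Function.Semiconj σ P Q

namespace IsReversal

variable {f : LinearMap.BilinForm K V} {P Q σ : End K V}

lemma neg (h : IsReversal f P Q σ) : IsReversal f P Q (-σ) where
  involutive x := by simp [h.involutive x]
  isOrthogonal x y := by simp [h.isOrthogonal x y]
  semiconj x := by simp [h.semiconj x]

lemma of_neg (h : IsReversal f (-P) (-Q) σ) : IsReversal f P Q σ where
  involutive := h.involutive
  isOrthogonal := h.isOrthogonal
  semiconj x := by simpa using h.semiconj x

lemma det_eq_one_or (h : IsReversal f P Q σ) : LinearMap.det σ = 1 ∨ LinearMap.det σ = -1 := by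
  rw [← mul_self_eq_one_iff, ← map_mul, show σ * σ = 1 from LinearMap.ext h.involutive, map_one]

end IsReversal

section Gluing

variable [FiniteDimensional K V] {f : LinearMap.BilinForm K V} {P Q : End K V}

lemma exists_isReversal_of_restrict (hf : f.IsSymm) {U : Submodule K V}
    (hU : (f.restrict U).Nondegenerate)
    (hPU : ∀ x ∈ U, P x ∈ U) (hQU : ∀ x ∈ U, Q x ∈ U)
    (hPU' : ∀ x ∈ f.orthogonal U, P x ∈ f.orthogonal U)
    (hQU' : ∀ x ∈ f.orthogonal U, Q x ∈ f.orthogonal U)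
    {σ : End K U} {τ : End K (f.orthogonal U)}
    (hσ : IsReversal (f.restrict U) (P.restrict hPU) (Q.restrict hQU) σ)
    (hτ : IsReversal (f.restrict (f.orthogonal U)) (P.restrict hPU') (Q.restrict hQU') τ) :
    ∃ ρ : End K V, IsReversal f P Q ρ ∧ LinearMap.det ρ = LinearMap.det σ * LinearMap.det τ := by
  let e := Submodule.prodEquivOfIsCompl U _
    (LinearMap.BilinForm.isCompl_orthogonal_of_restrict_nondegenerate hf.isRefl hU)
  let ρ : End K V := e.conj (σ.prodMap τ)
  have ρ_add (u : U) (w : f.orthogonal U) : ρ (u + w) = σ u + τ w := by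
    rw [show (u + w : V) = e (u, w) by simp [e]]
    simp [ρ, e, LinearEquiv.conj_apply]
  have exists_add (x : V) : ∃ (u : U) (w : f.orthogonal U), (u + w : V) = x :=
    (e.surjective x).imp' Prod.fst fun y hy => ⟨y.2, by simpa [e] using hy⟩
  have apply_add (u u' : U) (w w' : f.orthogonal U) :
      f (u + w) (u' + w') = f.restrict U u u' + f.restrict (f.orthogonal U) w w' := by
    have huw (u : U) (w : f.orthogonal U) : f u w = 0 := w.2 u u.2
    have hwu (u : U) (w : f.orthogonal U) : f w u = 0 := (hf.eq _ _).symm.trans (huw u w)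
    simp [huw, hwu]
  refine ⟨ρ, ⟨fun x => ?_, fun x y => ?_, fun x => ?_⟩, ?_⟩
  · obtain ⟨u, w, rfl⟩ := exists_add x
    rw [ρ_add, ρ_add, hσ.involutive, hτ.involutive]
  · obtain ⟨u, w, rfl⟩ := exists_add x
    obtain ⟨u', w', rfl⟩ := exists_add y
    rw [ρ_add, ρ_add, apply_add, apply_add, hσ.isOrthogonal, hτ.isOrthogonal]
  · obtain ⟨u, w, rfl⟩ := exists_add x
    have hρP := ρ_add (P.restrict hPU u) (P.restrict hPU' w)
    rw [hσ.semiconj, hτ.semiconj] at hρP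
    rw [ρ_add, map_add P, map_add Q]
    exact hρP
  · rw [← LinearMap.det_prodMap, ← LinearMap.det_conj (σ.prodMap τ) e]
    rfl

end Gluing

section Descent

variable {M : Type*} [AddCommGroup M] [Module K M] {f : LinearMap.BilinForm K V} {P Q : End K V}

lemma exists_isReversal_of_surjective (hnd : f.Nondegenerate) {π : M →ₗ[K] V}
    (hπ : Function.Surjective π) {S T s : End K M} (hS : Function.Semiconj π S P)
    (hT : Function.Semiconj π T Q) (hs : Function.Involutive s) (hsST : Function.Semiconj s S T)
    (hπs : ∀ m m', f (π (s m)) (π (s m')) = f (π m) (π m')) : ∃ σ, IsReversal f P Q σ := by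
  have hker : LinearMap.ker π ≤ LinearMap.ker (π ∘ₗ s) := fun m hm => hnd.1 _ fun y => by
    obtain ⟨m', rfl⟩ := hπ y
    rw [← hs m', LinearMap.comp_apply, hπs, LinearMap.mem_ker.1 hm, map_zero, LinearMap.zero_apply]
  let σ : End K V := (LinearMap.ker π).liftQ (π ∘ₗ s) hker ∘ₗ (π.quotKerEquivOfSurjective hπ).symm
  have hσ (m : M) : σ (π m) = π (s m) := by
    rw [LinearMap.comp_apply, ← π.quotKerEquivOfSurjective_apply_mk hπ m]
    simp
  refine ⟨σ, hπ.forall.2 fun m => ?_, hπ.forall.2 fun m => hπ.forall.2 fun m' => ?_,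
    hπ.forall.2 fun m => ?_⟩
  · rw [hσ, hσ, hs]
  · rw [hσ, hσ, hπs]
  · rw [← hS, hσ, hsST, hT, hσ]

end Descent

section SignedReflection

variable {ι : Type*} {ε : ι → K}

/-- The map sending `(p i)` to `(ε i • p i (-X))`. When `ε` takes values `±1`, it is the involution
of the free module `ι → K[X]` that anticommutes with multiplication by `X` and from which the
reversals of skew-adjoint maps are induced. -/
noncomputable def signedReflection (ε : ι → K) : End K (ι → K[X]) :=
  LinearMap.pi fun i => ε i • (aeval (-X : K[X])).toLinearMap ∘ₗ LinearMap.proj i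

lemma signedReflection_apply (p : ι → K[X]) (i : ι) :
    signedReflection ε p i = ε i • aeval (-X) (p i) := rfl

lemma signedReflection_involutive (hε : ∀ i, ε i * ε i = 1) :
    Function.Involutive (signedReflection ε) := fun p => funext fun i => by
  simp [signedReflection_apply, smul_smul, hε, ← aeval_algHom_apply]

end SignedReflection

section PolyCombination

variable {ι : Type*} [Fintype ι]

/-- The map `p ↦ ∑ i, p i (Y) (v i)`, whose range is the `Y`-invariant subspace generated by the
vectors `v i`. -/
noncomputable def polyCombination (Y : End K V) (v : ι → V) : (ι → K[X]) →ₗ[K] V :=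
  ∑ i, LinearMap.applyₗ (v i) ∘ₗ (aeval Y).toLinearMap ∘ₗ LinearMap.proj i

lemma polyCombination_apply (Y : End K V) (v : ι → V) (p : ι → K[X]) :
    polyCombination Y v p = ∑ i, aeval Y (p i) (v i) := by
  simp [polyCombination]

lemma polyCombination_mul_left (Y : End K V) (v : ι → V) (r : K[X]) (p : ι → K[X]) :
    polyCombination Y v (fun i => r * p i) = aeval Y r (polyCombination Y v p) := by
  simp [polyCombination_apply]

lemma aeval_apply_mem_range_polyCombination (Y : End K V) (v : ι → V) (r : K[X]) (i : ι) :
    aeval Y r (v i) ∈ LinearMap.range (polyCombination Y v) := by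
  classical
  exact ⟨Pi.single i r, by simp [polyCombination, Pi.single_apply, apply_ite]⟩

lemma range_polyCombination_invariant (Y : End K V) (v : ι → V) :
    ∀ x ∈ LinearMap.range (polyCombination Y v), Y x ∈ LinearMap.range (polyCombination Y v) := by
  rintro _ ⟨p, rfl⟩
  exact ⟨_, by rw [polyCombination_mul_left Y v X p, aeval_X]⟩

variable {f : LinearMap.BilinForm K V} {Y : End K V} {v : ι → V} {ε : ι → K}

lemma apply_polyCombination_signedReflection (hY : f.IsAdjointPair f Y ⇑(-Y))
    (hεv : ∀ i j (r : K[X]), ε i * ε j * f (aeval (-Y) r (v i)) (v j) = f (aeval Y r (v i)) (v j))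
    (p q : ι → K[X]) :
    f (polyCombination Y v (signedReflection ε p)) (polyCombination Y v (signedReflection ε q)) =
      f (polyCombination Y v p) (polyCombination Y v q) := by
  have hY_neg : f.IsAdjointPair f ⇑(-Y) Y := fun x y => by simp [hY x y]
  have aeval_aeval_neg_X (Z : End K V) (r : K[X]) :
      aeval Z (aeval (-X : K[X]) r) = aeval (-Z) r := by
    rw [← aeval_algHom_apply, map_neg, aeval_X]
  simp only [polyCombination_apply, signedReflection_apply, map_sum, LinearMap.sum_apply, map_smul,
    LinearMap.smul_apply, smul_eq_mul, aeval_aeval_neg_X, Finset.mul_sum]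
  refine Finset.sum_congr rfl fun j _ => Finset.sum_congr rfl fun i _ => ?_
  have h := hεv i j (aeval (-X) (q j) * p i)
  simp only [map_mul, End.mul_apply, aeval_aeval_neg_X, neg_neg] at h
  rw [isAdjointPair_aeval hY (q j), isAdjointPair_aeval hY_neg (q j)] at h
  rw [← h]
  ring

lemma exists_isReversal_range_polyCombination (hY : f.IsAdjointPair f Y ⇑(-Y))
    (hε : ∀ i, ε i * ε i = 1)
    (hεv : ∀ i j (r : K[X]), ε i * ε j * f (aeval (-Y) r (v i)) (v j) = f (aeval Y r (v i)) (v j))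
    (hnd : (f.restrict (LinearMap.range (polyCombination Y v))).Nondegenerate) :
    ∃ σ, IsReversal (f.restrict (LinearMap.range (polyCombination Y v)))
      (Y.restrict (range_polyCombination_invariant Y v))
      (-Y.restrict (range_polyCombination_invariant Y v)) σ := by
  let mulX : End K (ι → K[X]) := (LinearMap.mulLeft K X).compLeft ι
  have mulX_apply (p : ι → K[X]) (i : ι) : mulX p i = X * p i := rfl
  have hX (p : ι → K[X]) : polyCombination Y v (mulX p) = Y (polyCombination Y v p) :=
    (polyCombination_mul_left Y v X p).trans (by rw [aeval_X])
  refine exists_isReversal_of_surjective hnd (LinearMap.surjective_rangeRestrict _)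
    (S := mulX) (T := -mulX) (fun p => Subtype.ext (hX p)) (fun p => Subtype.ext ?_)
    (signedReflection_involutive hε) (fun p => funext fun i => ?_)
    (apply_polyCombination_signedReflection hY hεv)
  · simp [hX]
  · simp [signedReflection_apply, mulX_apply]

end PolyCombination

section ReversibleSubspaces

variable {f : LinearMap.BilinForm K V} {Y : End K V}

/-- `Y` leaves invariant some nonzero nondegenerate subspace and has a reversal on it. Such a
subspace splits off orthogonally, so that reversals can be constructed by induction. -/
def HasReversibleSubspace (f : LinearMap.BilinForm K V) (Y : End K V) : Prop :=
  ∃ (U : Submodule K V) (hU : ∀ x ∈ U, Y x ∈ U), U ≠ ⊥ ∧ (f.restrict U).Nondegenerate ∧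
    ∃ σ, IsReversal (f.restrict U) (Y.restrict hU) (-Y.restrict hU) σ

lemma hasReversibleSubspace_of_polyCombination {ι : Type*} [Fintype ι] {v : ι → V} {ε : ι → K}
    (hf : f.IsSymm) (hY : f.IsAdjointPair f Y ⇑(-Y)) (hε : ∀ i, ε i * ε i = 1)
    (hεv : ∀ i j (r : K[X]), ε i * ε j * f (aeval (-Y) r (v i)) (v j) = f (aeval Y r (v i)) (v j))
    (hv : ∃ i, v i ≠ 0)
    (hsep : ∀ p, (∀ j (r : K[X]), f (aeval Y r (polyCombination Y v p)) (v j) = 0) →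
      polyCombination Y v p = 0) : HasReversibleSubspace f Y := by
  have hmem := aeval_apply_mem_range_polyCombination Y v
  have hnd : (f.restrict (LinearMap.range (polyCombination Y v))).Nondegenerate := by
    refine LinearMap.BilinForm.nondegenerate_restrict_of_disjoint_orthogonal f hf.isRefl
      (Submodule.disjoint_def.2 ?_)
    rintro _ ⟨p, rfl⟩ hp
    refine hsep p fun j r => ?_
    have hr : aeval (-Y) r = aeval Y (aeval (-X : K[X]) r) := by
      rw [← aeval_algHom_apply, map_neg, aeval_X]
    rw [isAdjointPair_aeval hY, hr]
    exact (hf.eq _ _).symm.trans (hp _ (hmem _ j))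
  obtain ⟨i, hi⟩ := hv
  refine ⟨_, range_polyCombination_invariant Y v, fun hbot => hi ?_, hnd,
    exists_isReversal_range_polyCombination hY hε hεv hnd⟩
  simpa [hbot] using hmem 1 i

end ReversibleSubspaces

section Nilpotent

variable {Y : End K V} {s : ℕ} {v : V}

lemma pow_apply_aeval_eq_coeff_zero_smul (hv : (Y ^ (s + 1)) v = 0) (q : K[X]) :
    (Y ^ s) (aeval Y q v) = q.coeff 0 • (Y ^ s) v := by
  calc (Y ^ s) (aeval Y q v)
      = aeval Y (X ^ s * q) v := by simp
    _ = aeval Y (q.divX * X ^ (s + 1) + C (q.coeff 0) * X ^ s) v := by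
      conv_lhs => rw [← divX_mul_X_add q]
      ring_nf
    _ = q.coeff 0 • (Y ^ s) v := by simp [hv]

lemma apply_aeval_eq_coeff_mul {g : Dual K V} (hv : (Y ^ (s + 1)) v = 0)
    (hg : ∀ i < s, g ((Y ^ i) v) = 0) (r : K[X]) :
    g (aeval Y r v) = r.coeff s * g ((Y ^ s) v) := by
  have hne (i : ℕ) (hi : i ≠ s) : g ((Y ^ i) v) = 0 := by
    rcases hi.lt_or_gt with hlt | hgt
    · exact hg i hlt
    · rw [End.pow_map_zero_of_le hgt hv, map_zero]
  rw [aeval_eq_sum_range, LinearMap.sum_apply, map_sum]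
  rw [Finset.sum_eq_single s (fun i _ hi => by simp [hne i hi]) fun hs => ?_]
  · simp
  · simp [coeff_eq_zero_of_natDegree_lt (by simpa using hs)]

lemma apply_aeval_neg_of_odd {g : Dual K V} (hv : (Y ^ (s + 1)) v = 0)
    (hg : ∀ i < s, g ((Y ^ i) v) = 0) (hs : Odd s) (r : K[X]) :
    g (aeval (-Y) r v) = -g (aeval Y r v) := by
  have hg_neg (i : ℕ) (hi : i < s) : g (((-Y) ^ i) v) = 0 := by
    rcases i.even_or_odd with h | h <;> simp [h.neg_pow, hg i hi]
  rw [apply_aeval_eq_coeff_mul hv hg,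
    apply_aeval_eq_coeff_mul (by rwa [hs.add_one.neg_pow]) hg_neg]
  simp [hs.neg_pow]

lemma exists_apply_pow_eq_zero_of_lt {g : Dual K V} (hv : (Y ^ (s + 1)) v = 0)
    (hg : g ((Y ^ s) v) ≠ 0) :
    ∃ w, (Y ^ (s + 1)) w = 0 ∧ g ((Y ^ s) w) ≠ 0 ∧ ∀ i < s, g ((Y ^ i) w) = 0 := by
  suffices h : ∀ j ≤ s, ∃ w, (Y ^ (s + 1)) w = 0 ∧ g ((Y ^ s) w) ≠ 0 ∧
      ∀ i < s, j ≤ i → g ((Y ^ i) w) = 0 by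
    simpa using h 0 s.zero_le
  intro j hj
  induction hj using Nat.decreasingInduction with
  | self => exact ⟨v, hv, hg, fun i hi hsi => absurd hi hsi.not_gt⟩
  | of_succ j hj ih =>
    obtain ⟨w, hw, hgw, hlow⟩ := ih
    let c := g ((Y ^ j) w) / g ((Y ^ s) w)
    have pow_apply (i : ℕ) :
        (Y ^ i) (w - c • (Y ^ (s - j)) w) = (Y ^ i) w - c • (Y ^ (i + (s - j))) w := by
      rw [map_sub, map_smul, pow_add, End.mul_apply]
    have pow_apply_of_lt (i : ℕ) (hi : j < i) : (Y ^ i) (w - c • (Y ^ (s - j)) w) = (Y ^ i) w := by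
      rw [pow_apply, End.pow_map_zero_of_le (by lia : s + 1 ≤ i + (s - j)) hw, smul_zero, sub_zero]
    refine ⟨w - c • (Y ^ (s - j)) w, ?_, ?_, fun i hi hji => ?_⟩
    · rw [pow_apply_of_lt _ (by lia), hw]
    · rwa [pow_apply_of_lt _ hj]
    · rcases hji.eq_or_lt with rfl | hji
      · rw [pow_apply, Nat.add_sub_cancel' hi.le, map_sub, map_smul, smul_eq_mul,
          div_mul_cancel₀ _ hgw, sub_self]
      · rw [pow_apply_of_lt _ hji, hlow i hi hji]

end Nilpotent

section NilpotentReversal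

variable {f : LinearMap.BilinForm K V} {Y : End K V} {s : ℕ}

lemma polyCombination_eq_zero_of_gram {ι : Type*} [Fintype ι] {v : ι → V}
    (hv : ∀ i, (Y ^ (s + 1)) (v i) = 0)
    (hgram : ∀ c : ι → K, (∀ j, ∑ i, c i * f ((Y ^ s) (v i)) (v j) = 0) → c = 0)
    {p : ι → K[X]} (hp : ∀ j (r : K[X]), f (aeval Y r (polyCombination Y v p)) (v j) = 0) :
    polyCombination Y v p = 0 := by
  have hdvd : ∀ k ≤ s + 1, ∀ i, X ^ k ∣ p i := by
    intro k hk
    induction k with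
    | zero => simp
    | succ k ih =>
      choose q hq using ih (by lia)
      have hcoeff : (fun i => (q i).coeff 0) = 0 := hgram _ fun j => by
        rw [← hp j (X ^ (s - k))]
        have hpow (i : ι) :
            (Y ^ (s - k)) (aeval Y (p i) (v i)) = (q i).coeff 0 • (Y ^ s) (v i) := by
          rw [← pow_apply_aeval_eq_coeff_zero_smul (hv i), hq, map_mul, End.mul_apply, map_pow,
            aeval_X, ← End.mul_apply, ← pow_add, Nat.sub_add_cancel (by lia)]
        simp [polyCombination_apply, hpow]
      intro i
      rw [hq, pow_succ]
      exact mul_dvd_mul_left _ (X_dvd_iff.2 (congrFun hcoeff i))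
  rw [polyCombination_apply]
  refine Finset.sum_eq_zero fun i _ => ?_
  obtain ⟨q, hq⟩ := hdvd (s + 1) le_rfl i
  rw [hq, mul_comm, map_mul, End.mul_apply, map_pow, aeval_X, hv, map_zero]

lemma hasReversibleSubspace_of_pow_even (hK : (2 : K) ≠ 0) (hf : f.IsSymm) (hnd : f.Nondegenerate)
    (hY : f.IsAdjointPair f Y ⇑(-Y)) (hs : Even s) (hYs : Y ^ s ≠ 0) (hYs' : Y ^ (s + 1) = 0) :
    HasReversibleSubspace f Y := by
  have hself : f.IsAdjointPair f ⇑(Y ^ s) ⇑(Y ^ s) := by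
    simpa only [hs.neg_pow] using isAdjointPair_pow hY s
  obtain ⟨v, hv⟩ := exists_apply_self_ne_zero hK hf hnd hself hYs
  refine hasReversibleSubspace_of_polyCombination (ι := Unit) (v := fun _ => v) (ε := 1) hf hY
    (by simp) (fun _ _ r => ?_) ⟨(), fun h => hv (by simp [h])⟩ fun p =>
    polyCombination_eq_zero_of_gram (s := s) (by simp [hYs']) fun c hc => ?_
  · simpa [isAdjointPair_aeval hY r v v] using hf.eq _ _
  · exact funext fun _ => by simpa [hv] using hc ()

lemma hasReversibleSubspace_of_pow_odd (hK : (2 : K) ≠ 0) (hf : f.IsSymm) (hnd : f.Nondegenerate)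
    (hY : f.IsAdjointPair f Y ⇑(-Y)) (hs : Odd s) (hYs : Y ^ s ≠ 0) (hYs' : Y ^ (s + 1) = 0) :
    HasReversibleSubspace f Y := by
  have hskew : f.IsAdjointPair f ⇑(Y ^ s) ⇑(-Y ^ s) := by
    simpa only [hs.neg_pow] using isAdjointPair_pow hY s
  have hself_zero := apply_self_eq_zero hK hf hskew
  obtain ⟨w, u, hwu⟩ : ∃ w u, f w ((Y ^ s) u) ≠ 0 := by
    by_contra! h
    exact hYs (LinearMap.ext fun u => hnd.2 _ fun w => h w u)
  obtain ⟨v, -, hwv, hlow⟩ := exists_apply_pow_eq_zero_of_lt (by simp [hYs']) hwu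
  have hsign (r : K[X]) : f (aeval (-Y) r v) w = -f (aeval Y r v) w := by
    simpa only [hf.eq w] using apply_aeval_neg_of_odd (by simp [hYs']) hlow hs r
  have hswap (r : K[X]) (x y : V) : f (aeval (-Y) r x) y = f (aeval Y r y) x := by
    rw [hf.eq, isAdjointPair_aeval hY]
  have hanti (r : K[X]) : f (aeval Y r w) v = -f (aeval Y r v) w := by rw [← hswap, hsign]
  have hvw : f ((Y ^ s) v) w ≠ 0 := by rwa [hf.eq w] at hwv
  have hwv' : f ((Y ^ s) w) v = -f ((Y ^ s) v) w := by simpa using hanti (X ^ s)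
  refine hasReversibleSubspace_of_polyCombination (v := ![v, w]) (ε := ![1, -1]) hf hY
    (by simp [Fin.forall_fin_two]) ?_ ⟨0, fun h : v = 0 => hwv (by simp [h])⟩ fun p =>
    polyCombination_eq_zero_of_gram (s := s) (by simp [hYs']) fun c hc => ?_
  · simp [Fin.forall_fin_two, hswap, hanti]
  · have hc₀ : c 0 = 0 := by simpa [hself_zero, hvw] using hc 1
    have hc₁ : c 1 = 0 := by simpa [hself_zero, hwv', hvw] using hc 0
    exact funext (Fin.forall_fin_two.2 ⟨hc₀, hc₁⟩)

end NilpotentReversal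

section NonNilpotent

lemma pow_succ_dvd_of_forall_map_mul_eq_zero {R A : Type*} [CommRing R] [IsDomain R]
    [IsPrincipalIdealRing R] [AddMonoid A] {L : R →+ A} {q b : R} {t : ℕ} (hq : Irreducible q)
    (hLq : ∀ c, L (c * q ^ (t + 1)) = 0) (hLqt : L (q ^ t) ≠ 0) (hLb : ∀ c, L (c * b) = 0) :
    q ^ (t + 1) ∣ b := by
  let I : Ideal R :=
    { carrier := {b | ∀ c, L (c * b) = 0}
      zero_mem' := by simp
      add_mem' := fun ha hb c => by rw [mul_add, map_add, ha, hb, add_zero]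
      smul_mem' := fun a b hb c => by rw [smul_eq_mul, ← mul_assoc]; exact hb (c * a) }
  obtain ⟨g, hg⟩ := (IsPrincipalIdealRing.principal I).principal
  have mem_iff (x : R) : x ∈ I ↔ g ∣ x := by rw [hg]; exact Ideal.mem_span_singleton
  obtain ⟨k, hk, hgk⟩ := (dvd_prime_pow hq.prime _).1 ((mem_iff _).1 hLq)
  have hkt : t + 1 ≤ k := by
    by_contra! hlt
    have hmem : q ^ t ∈ I := (mem_iff _).2 (hgk.dvd.trans (pow_dvd_pow q (by lia)))
    exact hLqt (by simpa using hmem 1)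
  exact (pow_dvd_pow q hkt).trans (hgk.symm.dvd.trans ((mem_iff b).1 hLb))

lemma exists_eq_expand_two_add {R : Type*} [CommSemiring R] (b : R[X]) :
    ∃ b₀ b₁ : R[X], b = expand R 2 b₀ + X * expand R 2 b₁ := by
  induction b using Polynomial.induction_on' with
  | add p q hp hq =>
    obtain ⟨p₀, p₁, rfl⟩ := hp
    obtain ⟨q₀, q₁, rfl⟩ := hq
    exact ⟨p₀ + q₀, p₁ + q₁, by rw [map_add, map_add]; ring⟩
  | monomial n a =>
    rcases n.even_or_odd' with ⟨k, rfl | rfl⟩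
    · exact ⟨monomial k a, 0, by simp [mul_comm]⟩
    · exact ⟨0, monomial k a, by simp [X_mul_monomial, mul_comm]⟩

variable {f : LinearMap.BilinForm K V} {Y Z : End K V} {q : K[X]} {t : ℕ}

lemma apply_aeval_X_mul_expand_two_self (hK : (2 : K) ≠ 0) (hf : f.IsSymm)
    (hY : f.IsAdjointPair f Y ⇑(-Y)) (c : K[X]) (v : V) :
    f (aeval Y (X * expand K 2 c) v) v = 0 := by
  refine apply_self_eq_zero hK hf ?_ v
  convert isAdjointPair_aeval hY (X * expand K 2 c) using 2
  simp [expand_aeval]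

lemma aeval_apply_eq_zero_of_irreducible (hK : (2 : K) ≠ 0) (hf : f.IsSymm)
    (hY : f.IsAdjointPair f Y ⇑(-Y)) (hq : Irreducible q) (hqX : ¬ q ∣ X) {v : V}
    (hv : aeval (Y ^ 2) (q ^ (t + 1)) v = 0) (hqv : f (aeval (Y ^ 2) (q ^ t) v) v ≠ 0)
    {b : K[X]} (hb : ∀ r, f (aeval Y (r * b) v) v = 0) : aeval Y b v = 0 := by
  obtain ⟨b₀, b₁, rfl⟩ := exists_eq_expand_two_add b
  let L : K[X] →+ K :=
    { toFun c := f (aeval (Y ^ 2) c v) v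
      map_zero' := by simp
      map_add' := by simp }
  have apply_even (c : K[X]) : f (aeval Y (expand K 2 c) v) v = L c := by rw [expand_aeval]; rfl
  have apply_odd (c : K[X]) := apply_aeval_X_mul_expand_two_self hK hf hY c v
  have hLq (c : K[X]) : L (c * q ^ (t + 1)) = 0 := by
    change f (aeval (Y ^ 2) (c * q ^ (t + 1)) v) v = 0
    rw [map_mul, End.mul_apply, hv, map_zero, map_zero, LinearMap.zero_apply]
  have hLb₀ (c : K[X]) : L (c * b₀) = 0 := by
    have h := hb (expand K 2 c)
    rwa [show expand K 2 c * (expand K 2 b₀ + X * expand K 2 b₁) =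
        expand K 2 (c * b₀) + X * expand K 2 (c * b₁) by rw [map_mul, map_mul]; ring,
      map_add, LinearMap.add_apply, map_add, LinearMap.add_apply, apply_even, apply_odd,
      add_zero] at h
  have hLb₁ (c : K[X]) : L (c * (X * b₁)) = 0 := by
    have h := hb (X * expand K 2 c)
    rwa [show X * expand K 2 c * (expand K 2 b₀ + X * expand K 2 b₁) =
        X * expand K 2 (c * b₀) + expand K 2 (c * (X * b₁)) by
          rw [map_mul, map_mul, map_mul, expand_X]; ring,
      map_add, LinearMap.add_apply, map_add, LinearMap.add_apply, apply_even, apply_odd,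
      zero_add] at h
  obtain ⟨c₀, rfl⟩ := pow_succ_dvd_of_forall_map_mul_eq_zero hq hLq hqv hLb₀
  obtain ⟨c₁, rfl⟩ := hq.prime.pow_dvd_of_dvd_mul_left _ hqX
    (pow_succ_dvd_of_forall_map_mul_eq_zero hq hLq hqv hLb₁)
  have aeval_eq_zero (c : K[X]) : aeval (Y ^ 2) (q ^ (t + 1) * c) v = 0 := by
    rw [mul_comm, map_mul, End.mul_apply, hv, map_zero]
  rw [map_add, LinearMap.add_apply, expand_aeval, aeval_eq_zero, map_mul (aeval Y), End.mul_apply,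
    expand_aeval, aeval_eq_zero, map_zero, add_zero]

lemma hasReversibleSubspace_of_irreducible (hK : (2 : K) ≠ 0) (hf : f.IsSymm)
    (hY : f.IsAdjointPair f Y ⇑(-Y)) (hq : Irreducible q) (hqX : ¬ q ∣ X) {v : V}
    (hv : aeval (Y ^ 2) (q ^ (t + 1)) v = 0) (hqv : f (aeval (Y ^ 2) (q ^ t) v) v ≠ 0) :
    HasReversibleSubspace f Y := by
  refine hasReversibleSubspace_of_polyCombination (ι := Unit) (v := fun _ => v) (ε := 1) hf hY
    (by simp) (fun _ _ r => ?_) ⟨(), fun h => hqv (by simp [h])⟩ fun p hp => ?_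
  · simpa [isAdjointPair_aeval hY r v v] using hf.eq _ _
  · simp only [polyCombination_apply, Finset.univ_unique, Finset.sum_singleton] at hp ⊢
    refine aeval_apply_eq_zero_of_irreducible hK hf hY hq hqX hv hqv fun r => ?_
    rw [map_mul, End.mul_apply]
    exact hp () r

variable [FiniteDimensional K V]

lemma exists_apply_aeval_pow_self_ne_zero (hK : (2 : K) ≠ 0) (hf : f.IsSymm)
    (hnd : f.Nondegenerate) (hZ : f.IsAdjointPair f Z Z) (hq : Irreducible q)
    (hqZ : q ∣ minpoly K Z) :
    ∃ (t : ℕ) (v : V), aeval Z (q ^ (t + 1)) v = 0 ∧ f (aeval Z (q ^ t) v) v ≠ 0 := by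
  have hmin : minpoly K Z ≠ 0 := minpoly.ne_zero (Algebra.IsIntegral.isIntegral Z)
  obtain ⟨r, hr, hqr⟩ := (FiniteMultiplicity.of_not_isUnit hq.not_isUnit
    hmin).exists_eq_pow_mul_and_not_dvd
  obtain ⟨t, ht⟩ : ∃ t, multiplicity q (minpoly K Z) = t + 1 :=
    Nat.exists_eq_succ_of_ne_zero fun h => hqr (by rwa [hr, h, pow_zero, one_mul] at hqZ)
  rw [ht] at hr
  have hne : aeval Z (r * (q ^ t * r)) ≠ 0 := fun h => by
    have hdvd := minpoly.dvd K Z h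
    rw [hr, show q ^ (t + 1) * r = (q ^ t * r) * q by ring, mul_comm r] at hdvd
    refine hqr ((mul_dvd_mul_iff_left fun h0 => hmin ?_).1 hdvd)
    rw [hr, pow_succ', mul_assoc, h0, mul_zero]
  obtain ⟨v, hv⟩ := exists_apply_self_ne_zero hK hf hnd (isAdjointPair_aeval hZ _) hne
  refine ⟨t, aeval Z r v, ?_, ?_⟩
  · rw [← End.mul_apply, ← map_mul, ← hr, minpoly.aeval, LinearMap.zero_apply]
  · rwa [map_mul, map_mul, End.mul_apply, End.mul_apply, isAdjointPair_aeval hZ] at hv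

lemma exists_irreducible_dvd_minpoly_of_not_isNilpotent (hZ : ¬ IsNilpotent Z) :
    ∃ q : K[X], Irreducible q ∧ q ∣ minpoly K Z ∧ ¬ q ∣ X := by
  have hmin : minpoly K Z ≠ 0 := minpoly.ne_zero (Algebra.IsIntegral.isIntegral Z)
  obtain ⟨r, hr, hXr⟩ := (FiniteMultiplicity.of_not_isUnit (not_isUnit_X (R := K))
    hmin).exists_eq_pow_mul_and_not_dvd
  have hr_unit : ¬ IsUnit r := fun hu => hZ ⟨multiplicity X (minpoly K Z), by
    have h := minpoly.aeval K Z
    rw [hr, map_mul, map_pow, aeval_X] at h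
    exact (hu.map (aeval Z)).mul_left_eq_zero.1 h⟩
  obtain ⟨q, hq, hqr⟩ := WfDvdMonoid.exists_irreducible_factor hr_unit
    fun h => hXr (h ▸ dvd_zero X)
  refine ⟨q, hq, hr ▸ hqr.mul_left _, fun hqX => hXr ?_⟩
  exact (hq.associated_of_dvd irreducible_X hqX).symm.dvd.trans hqr

lemma hasReversibleSubspace_of_skew [Nontrivial V] (hK : (2 : K) ≠ 0) (hf : f.IsSymm)
    (hnd : f.Nondegenerate) (hY : f.IsAdjointPair f Y ⇑(-Y)) : HasReversibleSubspace f Y := by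
  by_cases hnil : IsNilpotent Y
  · obtain ⟨s, hs⟩ := Nat.exists_eq_succ_of_ne_zero (pos_nilpotencyClass_iff.2 hnil).ne'
    obtain ⟨hYs', hYs⟩ := nilpotencyClass_eq_succ_iff.1 hs
    rcases s.even_or_odd with hs | hs
    · exact hasReversibleSubspace_of_pow_even hK hf hnd hY hs hYs hYs'
    · exact hasReversibleSubspace_of_pow_odd hK hf hnd hY hs hYs hYs'
  · have hsq : f.IsAdjointPair f ⇑(Y ^ 2) ⇑(Y ^ 2) := by
      simpa only [neg_sq] using isAdjointPair_pow hY 2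
    obtain ⟨q, hq, hqY, hqX⟩ := exists_irreducible_dvd_minpoly_of_not_isNilpotent
      (mt (IsNilpotent.pow_iff_pos two_ne_zero).1 hnil)
    obtain ⟨t, v, hv, hqv⟩ := exists_apply_aeval_pow_self_ne_zero hK hf hnd hsq hq hqY
    exact hasReversibleSubspace_of_irreducible hK hf hY hq hqX hv hqv

end NonNilpotent

section Cayley

lemma injective_add_one {P : End K V} (hP : P.eigenspace (-1) = ⊥) :
    Function.Injective ⇑(P + 1) := by
  rwa [← LinearMap.ker_eq_bot, ← sub_neg_eq_add, ← neg_one_smul K (1 : End K V),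
    ← End.eigenspace_def]

variable [FiniteDimensional K V] {f : LinearMap.BilinForm K V}

theorem exists_isReversal_of_skew (hK : (2 : K) ≠ 0) (hf : f.IsSymm) (hnd : f.Nondegenerate)
    {Y : End K V} (hY : f.IsAdjointPair f Y ⇑(-Y)) : ∃ σ, IsReversal f Y (-Y) σ := by
  induction hn : finrank K V using Nat.strong_induction_on generalizing V with
  | _ n ih =>
    rcases subsingleton_or_nontrivial V with _ | _
    · exact ⟨1, fun _ => rfl, fun _ _ => rfl, fun _ => Subsingleton.elim _ _⟩
    obtain ⟨U, hU, hU₀, hndU, σ, hσ⟩ := hasReversibleSubspace_of_skew hK hf hnd hY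
    have hnegU : ∀ x ∈ U, (-Y) x ∈ U := fun x hx => neg_mem (hU x hx)
    have hnegU' := orthogonal_invariant hY hU
    have hU' : ∀ x ∈ f.orthogonal U, Y x ∈ f.orthogonal U :=
      orthogonal_invariant (isAdjointPair_symm hf hY) hnegU
    have hlt : finrank K (f.orthogonal U) < n := by
      have hpos : 0 < finrank K U := Submodule.one_le_finrank_iff.2 hU₀
      have hsum := Submodule.finrank_add_eq_of_isCompl
        (LinearMap.BilinForm.isCompl_orthogonal_of_restrict_nondegenerate hf.isRefl hndU)
      lia
    obtain ⟨τ, hτ⟩ := ih _ hlt (isSymm_restrict hf _)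
      (nondegenerate_restrict_orthogonal hf hnd hndU) (Y := Y.restrict hU') (fun x y => hY x y) rfl
    exact (exists_isReversal_of_restrict hf hndU hU hnegU hU' hnegU' hσ hτ).imp fun _ h => h.1

variable {P Q : End K V}

lemma exists_isReversal_of_eigenspace_eq_bot (hK : (2 : K) ≠ 0) (hf : f.IsSymm)
    (hnd : f.Nondegenerate) (hPQ : f.IsAdjointPair f P Q) (hQP : Q * P = 1)
    (hP : P.eigenspace (-1) = ⊥) : ∃ σ, IsReversal f P Q σ := by
  let E := LinearEquiv.ofInjectiveEndo (P + 1) (injective_add_one hP)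
  have E_apply (x : V) : E x = P x + x := rfl
  -- The Cayley transform of `P`: its reversals are those of `P`.
  let Y : End K V := (P - 1) ∘ₗ E.symm.toLinearMap
  have Y_apply (x : V) : Y (E x) = P x - x := by simp [Y]
  have hY : f.IsAdjointPair f Y ⇑(-Y) := by
    refine E.surjective.forall.2 fun x => E.surjective.forall.2 fun y => ?_
    rw [LinearMap.neg_apply, Y_apply, Y_apply, E_apply, E_apply]
    simp only [map_add, map_sub, map_neg, LinearMap.add_apply, LinearMap.sub_apply,
      apply_apply_of_isAdjointPair hPQ hQP]
    ring
  obtain ⟨σ, hσ⟩ := exists_isReversal_of_skew hK hf hnd hY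
  refine ⟨σ, hσ.involutive, hσ.isOrthogonal, fun x => ?_⟩
  obtain ⟨y, hy⟩ := E.surjective (σ (E x))
  have hsub : σ (P x) - σ x = y - P y := by
    rw [← map_sub, ← Y_apply, hσ.semiconj, LinearMap.neg_apply, ← hy, Y_apply, neg_sub]
  have hadd : σ (P x) + σ x = y + P y := by
    rw [← map_add, ← E_apply, ← hy, E_apply, add_comm]
  have hσP : σ (P x) = y := smul_right_injective V hK (by
    linear_combination (norm := (simp only [two_smul]; module)) hsub + hadd)
  have hσx : σ x = P y := by rw [hσP] at hadd; exact add_left_cancel hadd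
  rw [hσP, hσx]
  exact (LinearMap.congr_fun hQP y).symm

lemma det_eq_one_of_eigenspace_eq_bot (hnd : f.Nondegenerate) (hPQ : f.IsAdjointPair f P Q)
    (hQP : Q * P = 1) (hP : P.eigenspace (-1) = ⊥) : LinearMap.det P = 1 := by
  have hdet : LinearMap.det (P + 1) = LinearMap.det (Q + 1) :=
    det_eq_of_isAdjointPair hnd (hPQ.add LinearMap.isAdjointPair_one)
  have hmul : P * (Q + 1) = P + 1 := by
    rw [mul_add, mul_eq_one_comm.1 hQP, mul_one, add_comm]
  have hne : LinearMap.det (Q + 1) ≠ 0 := by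
    rw [← hdet]
    have hunit : IsUnit (P + 1) := (LinearMap.isUnit_iff_ker_eq_bot _).2 <|
      LinearMap.ker_eq_bot.2 (injective_add_one hP)
    exact (hunit.map LinearMap.det).ne_zero
  refine mul_right_cancel₀ hne ?_
  rw [← map_mul, hmul, hdet, one_mul]

end Cayley

section MinusOneEigenspace

lemma det_eq_neg_one_pow_finrank [FiniteDimensional K V] {β : End K V} (hβ : IsNilpotent (β + 1)) :
    LinearMap.det β = (-1) ^ finrank K V := by
  have hdet : LinearMap.det (1 - (β + 1)) = 1 := by
    have h := LinearMap.eval_charpoly (β + 1) (1 : K)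
    rwa [hβ.charpoly_eq_X_pow_finrank, eval_pow, eval_X, one_pow, map_one, eq_comm] at h
  rw [show β = (-1 : K) • (1 - (β + 1)) by simp, LinearMap.det_smul, hdet, mul_one]

lemma maxGenEigenspace_neg_one_le {P Q : End K V} (hQP : Q * P = 1) (hPQ : P * Q = 1) :
    P.maxGenEigenspace (-1) ≤ Q.maxGenEigenspace (-1) := by
  have hadd : Q - (-1 : K) • 1 = Q * (P - (-1 : K) • 1) := by
    simp [mul_add, hQP, add_comm]
  have hcomm : Commute Q (P - (-1 : K) • 1) :=
    Commute.sub_right (hQP.trans hPQ.symm) ((Commute.one_right Q).smul_right _)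
  intro x hx
  obtain ⟨k, hk⟩ := (End.mem_maxGenEigenspace P (-1) x).1 hx
  refine (End.mem_maxGenEigenspace Q (-1) x).2 ⟨k, ?_⟩
  rw [hadd, hcomm.mul_pow, End.mul_apply, hk, map_zero]

variable [FiniteDimensional K V] {f : LinearMap.BilinForm K V} {P Q : End K V}

lemma nondegenerate_restrict_maxGenEigenspace (hf : f.IsSymm) (hnd : f.Nondegenerate)
    (hPQ : f.IsAdjointPair f P Q) {μ : K} (hle : P.maxGenEigenspace μ ≤ Q.maxGenEigenspace μ) :
    (f.restrict (P.maxGenEigenspace μ)).Nondegenerate := by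
  refine LinearMap.BilinForm.nondegenerate_restrict_of_disjoint_orthogonal f hf.isRefl
    (Submodule.disjoint_def.2 fun x hx hx' => hnd.2 x fun y => ?_)
  obtain ⟨k, hk⟩ := (End.mem_maxGenEigenspace Q μ x).1 (hle hx)
  obtain ⟨n, hcompl, hkn⟩ := ((LinearMap.eventually_isCompl_ker_pow_range_pow
    (P - μ • 1)).and (Filter.eventually_ge_atTop k)).exists
  have hxn : ((Q - μ • 1) ^ n) x = 0 := Module.End.pow_map_zero_of_le hkn hk
  have hadj : f.IsAdjointPair f ⇑((P - μ • 1) ^ n) ⇑((Q - μ • 1) ^ n) :=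
    isAdjointPair_pow (hPQ.sub fun x y => by simp) n
  obtain ⟨a, ha, _, ⟨b, rfl⟩, rfl⟩ := Submodule.mem_sup.1
    (hcompl.sup_eq_top ▸ Submodule.mem_top : y ∈ _ ⊔ _)
  have hax : f a x = 0 := hx' a ((End.mem_maxGenEigenspace P μ a).2 ⟨n, ha⟩)
  rw [map_add, LinearMap.add_apply, hax, hadj, hxn, map_zero, add_zero]

lemma nondegenerate_restrict_maxGenEigenspace_neg_one (hf : f.IsSymm) (hnd : f.Nondegenerate)
    (hPQ : f.IsAdjointPair f P Q) (hQP : Q * P = 1) :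
    (f.restrict (P.maxGenEigenspace (-1))).Nondegenerate :=
  nondegenerate_restrict_maxGenEigenspace hf hnd hPQ
    (maxGenEigenspace_neg_one_le hQP (mul_eq_one_comm.1 hQP))

lemma disjoint_eigenspace_orthogonal_maxGenEigenspace (hf : f.IsSymm) {μ : K}
    (hU : (f.restrict (P.maxGenEigenspace μ)).Nondegenerate) :
    Disjoint (P.eigenspace μ) (f.orthogonal (P.maxGenEigenspace μ)) :=
  (LinearMap.BilinForm.isCompl_orthogonal_of_restrict_nondegenerate hf.isRefl hU).disjoint.mono_left
    End.eigenspace_le_maxGenEigenspace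

lemma det_eq_neg_one_pow_finrank_maxGenEigenspace (hf : f.IsSymm) (hnd : f.Nondegenerate)
    (hPQ : f.IsAdjointPair f P Q) (hQP : Q * P = 1) :
    LinearMap.det P = (-1) ^ finrank K (P.maxGenEigenspace (-1)) := by
  set U := P.maxGenEigenspace (-1)
  have hndU := nondegenerate_restrict_maxGenEigenspace_neg_one hf hnd hPQ hQP
  have hPU : ∀ x ∈ U, P x ∈ U := End.mapsTo_maxGenEigenspace_of_comm (Commute.refl P) _
  have hQU : ∀ x ∈ U, Q x ∈ U := End.mapsTo_maxGenEigenspace_of_comm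
    ((mul_eq_one_comm.1 hQP).trans hQP.symm) _
  have hPU' := orthogonal_invariant (isAdjointPair_symm hf hPQ) hQU
  have hQU' := orthogonal_invariant hPQ hPU
  have hdet : LinearMap.det (P.restrict hPU) = (-1) ^ finrank K U :=
    det_eq_neg_one_pow_finrank (by
      convert End.isNilpotent_restrict_maxGenEigenspace_sub_algebraMap P (-1) using 1
      ext x
      simp)
  have hdet' : LinearMap.det (P.restrict hPU') = 1 :=
    det_eq_one_of_eigenspace_eq_bot (f := f.restrict (f.orthogonal U)) (Q := Q.restrict hQU')
      (nondegenerate_restrict_orthogonal hf hnd hndU) (fun x y => hPQ x y)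
      (restrict_mul_restrict_eq_one hQP _ _)
      (End.eigenspace_restrict_eq_bot hPU'
        (disjoint_eigenspace_orthogonal_maxGenEigenspace hf hndU))
  rw [det_eq_det_restrict_mul_det_restrict
    (LinearMap.BilinForm.isCompl_orthogonal_of_restrict_nondegenerate hf.isRefl hndU) hPU hPU',
    hdet, hdet', mul_one]

end MinusOneEigenspace

section Isometries

variable [FiniteDimensional K V] {f : LinearMap.BilinForm K V} {P Q : End K V}

theorem exists_isReversal_of_isometry (hK : (2 : K) ≠ 0) (hf : f.IsSymm) (hnd : f.Nondegenerate)
    (hPQ : f.IsAdjointPair f P Q) (hQP : Q * P = 1) : ∃ σ, IsReversal f P Q σ := by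
  set U := P.maxGenEigenspace (-1)
  have hndU := nondegenerate_restrict_maxGenEigenspace_neg_one hf hnd hPQ hQP
  have hPU : ∀ x ∈ U, P x ∈ U := End.mapsTo_maxGenEigenspace_of_comm (Commute.refl P) _
  have hQU : ∀ x ∈ U, Q x ∈ U := End.mapsTo_maxGenEigenspace_of_comm
    ((mul_eq_one_comm.1 hQP).trans hQP.symm) _
  have hPU' := orthogonal_invariant (isAdjointPair_symm hf hPQ) hQU
  have hQU' := orthogonal_invariant hPQ hPU
  obtain ⟨σ, hσ⟩ : ∃ σ, IsReversal (f.restrict U) (P.restrict hPU) (Q.restrict hQU) σ := by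
    have heig : End.eigenspace (-P.restrict hPU) (-1) = ⊥ := by
      have hdisj : Disjoint (P.eigenspace 1) U :=
        End.disjoint_genEigenspace P (fun h => hK (by linear_combination h)) _ _
      rw [← End.eigenspace_restrict_eq_bot hPU hdisj]
      ext x
      simp
    obtain ⟨σ, hσ⟩ := exists_isReversal_of_eigenspace_eq_bot hK (isSymm_restrict hf U) hndU
      (P := -P.restrict hPU) (Q := -Q.restrict hQU) (fun x y => by simpa using hPQ x y)
      (LinearMap.ext fun x => Subtype.ext (by simpa using LinearMap.congr_fun hQP x)) heig
    exact ⟨σ, hσ.of_neg⟩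
  obtain ⟨τ, hτ⟩ := exists_isReversal_of_eigenspace_eq_bot hK (isSymm_restrict hf (f.orthogonal U))
    (nondegenerate_restrict_orthogonal hf hnd hndU) (P := P.restrict hPU') (Q := Q.restrict hQU')
    (fun x y => hPQ x y) (restrict_mul_restrict_eq_one hQP _ _)
    (End.eigenspace_restrict_eq_bot hPU'
      (disjoint_eigenspace_orthogonal_maxGenEigenspace hf hndU))
  exact (exists_isReversal_of_restrict hf hndU hPU hQU hPU' hQU' hσ hτ).imp fun _ h => h.1

lemma exists_isReversal_det_eq_one_of_odd_finrank (hK : (2 : K) ≠ 0) (hf : f.IsSymm)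
    (hnd : f.Nondegenerate) (hPQ : f.IsAdjointPair f P Q) (hQP : Q * P = 1) {U : Submodule K V}
    (hndU : (f.restrict U).Nondegenerate) (hPU : ∀ x ∈ U, P x ∈ U) (hQU : ∀ x ∈ U, Q x ∈ U)
    (hodd : Odd (finrank K U)) : ∃ σ, IsReversal f P Q σ ∧ LinearMap.det σ = 1 := by
  have hPU' := orthogonal_invariant (isAdjointPair_symm hf hPQ) hQU
  have hQU' := orthogonal_invariant hPQ hPU
  obtain ⟨σ, hσ⟩ := exists_isReversal_of_isometry hK (isSymm_restrict hf U) hndU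
    (P := P.restrict hPU) (Q := Q.restrict hQU) (fun x y => hPQ x y)
    (restrict_mul_restrict_eq_one hQP _ _)
  obtain ⟨τ, hτ⟩ := exists_isReversal_of_isometry hK (isSymm_restrict hf (f.orthogonal U))
    (nondegenerate_restrict_orthogonal hf hnd hndU) (P := P.restrict hPU') (Q := Q.restrict hQU')
    (fun x y => hPQ x y) (restrict_mul_restrict_eq_one hQP _ _)
  obtain ⟨ρ, hρ, hdetρ⟩ := exists_isReversal_of_restrict hf hndU hPU hQU hPU' hQU' hσ hτ
  obtain ⟨ρ', hρ', hdetρ'⟩ := exists_isReversal_of_restrict hf hndU hPU hQU hPU' hQU' hσ.neg hτ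
  have hneg : LinearMap.det ρ' = -LinearMap.det ρ := by
    rw [hdetρ', hdetρ, ← neg_one_smul K σ, LinearMap.det_smul, hodd.neg_one_pow]
    ring
  rcases hρ.det_eq_one_or with h | h
  · exact ⟨ρ, hρ, h⟩
  · exact ⟨ρ', hρ', by rw [hneg, h, neg_neg]⟩

lemma exists_isReversal_det_eq_one_of_commute (hK : (2 : K) ≠ 0) (hf : f.IsSymm)
    (hnd : f.Nondegenerate) (hPQ : f.IsAdjointPair f P Q) (hQP : Q * P = 1) {β γ : End K V}
    (hβγ : f.IsAdjointPair f β γ) (hγβ : γ * β = 1) (hβP : Commute β P)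
    (hdet : LinearMap.det β ≠ 1) : ∃ σ, IsReversal f P Q σ ∧ LinearMap.det σ = 1 := by
  have hβQ : Commute β Q :=
    calc β * Q = Q * P * β * Q := by rw [hQP, one_mul]
      _ = Q * β * (P * Q) := by rw [mul_assoc Q, ← hβP.eq]; simp only [mul_assoc]
      _ = Q * β := by rw [mul_eq_one_comm.1 hQP, mul_one]
  refine exists_isReversal_det_eq_one_of_odd_finrank hK hf hnd hPQ hQP
    (nondegenerate_restrict_maxGenEigenspace_neg_one hf hnd hβγ hγβ)
    (End.mapsTo_maxGenEigenspace_of_comm hβP _) (End.mapsTo_maxGenEigenspace_of_comm hβQ _) ?_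
  rw [det_eq_neg_one_pow_finrank_maxGenEigenspace hf hnd hβγ hγβ] at hdet
  exact Nat.not_even_iff_odd.1 fun h => hdet h.neg_one_pow

theorem exists_isReversal_det_eq_one (hK : (2 : K) ≠ 0) (hf : f.IsSymm) (hnd : f.Nondegenerate)
    (hPQ : f.IsAdjointPair f P Q) (hQP : Q * P = 1) {A B : End K V}
    (hAB : f.IsAdjointPair f A B) (hBA : B * A = 1) (hA : LinearMap.det A = 1)
    (hAP : A * P = Q * A) : ∃ σ, IsReversal f P Q σ ∧ LinearMap.det σ = 1 := by
  obtain ⟨σ, hσ⟩ := exists_isReversal_of_isometry hK hf hnd hPQ hQP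
  rcases hσ.det_eq_one_or with hdet | hdet
  · exact ⟨σ, hσ, hdet⟩
  have hσσ : σ * σ = 1 := LinearMap.ext hσ.involutive
  have hσP : σ * P = Q * σ := LinearMap.ext hσ.semiconj
  have hσadj : f.IsAdjointPair f σ σ := fun x y => by
    rw [← hσ.isOrthogonal x, hσ.involutive]
  have hAQ : A * Q = P * A :=
    calc A * Q = P * (Q * A) * Q := by rw [← mul_assoc, mul_eq_one_comm.1 hQP, one_mul]
      _ = P * A * (P * Q) := by rw [← hAP]; simp only [mul_assoc]
      _ = P * A := by rw [mul_eq_one_comm.1 hQP, mul_one]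
  have hinv : σ * B * (A * σ) = 1 := by
    rw [mul_assoc, ← mul_assoc B, hBA, one_mul, hσσ]
  have hcomm : Commute (A * σ) P := by
    rw [Commute, SemiconjBy, mul_assoc, hσP, ← mul_assoc, hAQ, mul_assoc]
  refine exists_isReversal_det_eq_one_of_commute hK hf hnd hPQ hQP (hAB.mul hσadj) hinv hcomm ?_
  rw [map_mul, hA, hdet, one_mul]
  exact fun h => hK (by linear_combination -h)

end Isometries

section LinearEquivs

variable {f : LinearMap.BilinForm K V}

lemma isAdjointPair_of_mem_specialOrthGroup {φ : V ≃ₗ[K] V} (hφ : φ ∈ specialOrthGroup f) :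
    f.IsAdjointPair f (φ : End K V) ((φ⁻¹ : V ≃ₗ[K] V) : End K V) := fun x y =>
  (congrArg (f (φ x)) (φ.apply_symm_apply y)).symm.trans (hφ.1 x (φ.symm y))

lemma isBireflectionalIn_of_isReversal {φ : V ≃ₗ[K] V} (hφ : φ ∈ specialOrthGroup f) {σ : End K V}
    (hσ : IsReversal f φ ((φ⁻¹ : V ≃ₗ[K] V) : End K V) σ) (hdet : LinearMap.det σ = 1) :
    IsBireflectionalIn (specialOrthGroup f) φ := by
  let S : V ≃ₗ[K] V := LinearEquiv.ofInvolutive σ hσ.involutive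
  have hS : S ∈ specialOrthGroup f := ⟨hσ.isOrthogonal, hdet⟩
  have hSS : S ^ 2 = 1 := by rw [pow_two]; exact LinearEquiv.ext hσ.involutive
  have hSφ : S * φ = φ⁻¹ * S := LinearEquiv.ext hσ.semiconj
  refine ⟨S, S * φ, hS, mul_mem hS hφ, hSS, ?_, ?_⟩
  · calc (S * φ) ^ 2 = φ⁻¹ * S * (S * φ) := by rw [pow_two, ← hSφ]
      _ = φ⁻¹ * S ^ 2 * φ := by simp only [pow_two, mul_assoc]
      _ = 1 := by rw [hSS, mul_one, inv_mul_cancel]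
  · rw [← mul_assoc, ← pow_two, hSS, one_mul]

end LinearEquivs

/-- If `φ ∈ SO(V)` is reversed by an element of `SO(V)`, then `φ` is a
product of two involutions of `SO(V)`. -/
theorem stmt11 [FiniteDimensional K V] (hK : ringChar K ≠ 2)
    (f : LinearMap.BilinForm K V) (hsymm : f.IsSymm) (hnd : f.Nondegenerate)
    (φ : V ≃ₗ[K] V) (hφ : φ ∈ specialOrthGroup f)
    (hrev : IsReversibleIn (specialOrthGroup f) φ) :
    IsBireflectionalIn (specialOrthGroup f) φ := by
  obtain ⟨α, hα, hrev⟩ := hrev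
  have hαφ : α * φ = φ⁻¹ * α := mul_inv_eq_iff_eq_mul.1 hrev
  have hinv (ψ : V ≃ₗ[K] V) : ((ψ⁻¹ : V ≃ₗ[K] V) : End K V) * (ψ : End K V) = 1 :=
    LinearMap.ext ψ.symm_apply_apply
  obtain ⟨σ, hσ, hdet⟩ := exists_isReversal_det_eq_one (Ring.two_ne_zero hK) hsymm hnd
    (isAdjointPair_of_mem_specialOrthGroup hφ) (hinv φ)
    (isAdjointPair_of_mem_specialOrthGroup hα) (hinv α) hα.2
    (LinearMap.ext fun x => LinearEquiv.congr_fun hαφ x)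
  exact isBireflectionalIn_of_isReversal hφ hσ hdet

end Biref
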